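/- Kearnes' Theorem on minimal clones with a Mal'tsev operation. Let C be a minimal clone on a set A that contains a Mal'tsev operation. Then there exist a prime p and an elementary abelian p-group structure (A;+) on A such that C is the clone generated by the ternary operation x₁ − x₂ + x₃ (the clone of an affine space over the field Z_p). -/

import Mathlib

universe u

/-- The type of finitary operations (of positive arity `n + 1`) on `A`. -/
abbrev Ops (A : Type u) : Type u := Σ n : ℕ, (Fin (n + 1) → A) → A

/-- A set of finitary operations on `A` is a clone if it contains all projection
operations and is closed under composition. -/
def IsClone {A : Type u} (C : Set (Ops A)) : Prop :=
  (∀ (n : ℕ) (i : Fin (n + 1)), (⟨n, fun x => x i⟩ : Ops A) ∈ C) ∧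
  ∀ (n m : ℕ) (f : (Fin (n + 1) → A) → A) (g : Fin (n + 1) → (Fin (m + 1) → A) → A),
    (⟨n, f⟩ : Ops A) ∈ C → (∀ i, (⟨m, g i⟩ : Ops A) ∈ C) →
    (⟨m, fun x => f fun i => g i x⟩ : Ops A) ∈ C

/-- The clone generated by a set `F` of operations: the least clone containing `F`. -/
def cloneGen {A : Type u} (F : Set (Ops A)) : Set (Ops A) :=
  ⋂₀ {C : Set (Ops A) | IsClone C ∧ F ⊆ C}

/-- The clone of all projection operations on `A`. -/
def projClone (A : Type u) : Set (Ops A) :=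
  {f : Ops A | ∃ i : Fin (f.1 + 1), f.2 = fun x => x i}

/-- A clone `M` is maximal if it is a proper subclone of the clone of all operations
and the clone of all operations is the only clone properly containing it. -/
def IsMaximalClone {A : Type u} (M : Set (Ops A)) : Prop :=
  IsClone M ∧ M ≠ Set.univ ∧
    ∀ D : Set (Ops A), IsClone D → M ⊆ D → D = M ∨ D = Set.univ

/-- A clone `C` is minimal if the clone of projections is its unique proper subclone. -/
def IsMinimalClone {A : Type u} (C : Set (Ops A)) : Prop :=
  IsClone C ∧ C ≠ projClone A ∧
    ∀ D : Set (Ops A), IsClone D → D ⊆ C → D = projClone A ∨ D = C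

/-- An `n`-ary operation `f` preserves a `k`-ary relation `ρ` if applying `f`
coordinatewise to tuples from `ρ` always yields a tuple in `ρ`. -/
def Preserves {A : Type u} {n k : ℕ} (f : (Fin n → A) → A) (ρ : Set (Fin k → A)) : Prop :=
  ∀ t : Fin n → Fin k → A, (∀ i, t i ∈ ρ) → (fun j => f fun i => t i j) ∈ ρ

/-- `Pol ρ` is the clone of all operations preserving the relation `ρ`. -/
def Pol {A : Type u} {k : ℕ} (ρ : Set (Fin k → A)) : Set (Ops A) :=
  {f : Ops A | Preserves f.2 ρ}

/-- A Mal'tsev operation: a ternary operation satisfying `p(x,x,y) = p(y,x,x) = y`. -/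
def IsMaltsev {A : Type u} (p : (Fin 3 → A) → A) : Prop :=
  ∀ x y : A, p ![x, x, y] = y ∧ p ![y, x, x] = y

section Kearnes

variable {A : Type u} {C : Set (Ops A)}

theorem IsClone.projClone_subset (hC : IsClone C) : projClone A ⊆ C := by
  rintro ⟨n, f⟩ ⟨i, hi⟩
  change f = fun x => x i at hi
  rw [hi]
  exact hC.1 n i

theorem isClone_cloneGen (F : Set (Ops A)) : IsClone (cloneGen F) := by
  refine ⟨fun n i D hD => hD.1.1 n i, fun n m f g hf hg D hD => ?_⟩
  exact hD.1.2 n m f g (hf D hD) fun i => hg i D hD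

theorem cloneGen_subset {F : Set (Ops A)} (hC : IsClone C) (hF : F ⊆ C) : cloneGen F ⊆ C :=
  fun _ hf => hf C ⟨hC, hF⟩

theorem subset_cloneGen (F : Set (Ops A)) : F ⊆ cloneGen F :=
  fun _ hf _ hD => hD.2 hf

/-- In a minimal clone, every operation other than a projection generates. -/
theorem IsMinimalClone.subset_of_mem (hC : IsMinimalClone C) {D : Set (Ops A)} (hD : IsClone D)
    (hDC : D ⊆ C) {f : Ops A} (hf : f ∈ D) (hp : f ∉ projClone A) : C ⊆ D := by
  rcases hC.2.2 D hD hDC with h | h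
  · exact absurd (h ▸ hf) hp
  · exact h.ge

theorem IsMinimalClone.nontrivial (hC : IsMinimalClone C) : Nontrivial A := by
  by_contra h
  rw [not_nontrivial_iff_subsingleton] at h
  refine hC.2.1 (Set.Subset.antisymm ?_ hC.1.projClone_subset)
  rintro ⟨n, f⟩ -
  exact ⟨0, funext fun x => Subsingleton.elim _ _⟩

/-- The binary operation `u`, in curried form, belongs to `C`. -/
def MemBinary (C : Set (Ops A)) (u : A → A → A) : Prop :=
  (⟨1, fun x => u (x 0) (x 1)⟩ : Ops A) ∈ C

/-- The ternary operation `w`, in curried form, belongs to `C`. -/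
def MemTernary (C : Set (Ops A)) (w : A → A → A → A) : Prop :=
  (⟨2, fun x => w (x 0) (x 1) (x 2)⟩ : Ops A) ∈ C

theorem MemTernary.comp {P : A → A → A → A} (hC : IsClone C) (hP : MemTernary C P) {n : ℕ}
    {f g h : (Fin (n + 1) → A) → A} (hf : (⟨n, f⟩ : Ops A) ∈ C) (hg : (⟨n, g⟩ : Ops A) ∈ C)
    (hh : (⟨n, h⟩ : Ops A) ∈ C) : (⟨n, fun x => P (f x) (g x) (h x)⟩ : Ops A) ∈ C := by
  have := hC.2 2 n (fun x => P (x 0) (x 1) (x 2)) ![f, g, h] hP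
    (by intro i; fin_cases i <;> assumption)
  simpa using this

theorem MemTernary.comp₃ {P f g h : A → A → A → A} (hC : IsClone C) (hP : MemTernary C P)
    (hf : MemTernary C f) (hg : MemTernary C g) (hh : MemTernary C h) :
    MemTernary C fun x y z => P (f x y z) (g x y z) (h x y z) :=
  MemTernary.comp hC hP hf hg hh

theorem MemBinary.comp {u : A → A → A} (hC : IsClone C) (hu : MemBinary C u) (i j : Fin 3) :
    (⟨2, fun x => u (x i) (x j)⟩ : Ops A) ∈ C := by
  have := hC.2 1 2 (fun x => u (x 0) (x 1)) ![fun x => x i, fun x => x j] hu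
    (by intro k; fin_cases k <;> exact hC.1 2 _)
  simpa using this

theorem memBinary_fst (hC : IsClone C) : MemBinary C fun x _ => x := hC.1 1 0

theorem memBinary_snd (hC : IsClone C) : MemBinary C fun _ y => y := hC.1 1 1

/-- A Mal'tsev operation in curried form. -/
structure IsMaltsevFun (P : A → A → A → A) : Prop where
  left (x y : A) : P x x y = y
  right (x y : A) : P y x x = y

theorem IsMaltsevFun.notMem_projClone [Nontrivial A] {P : A → A → A → A} (h : IsMaltsevFun P) :
    (⟨2, fun x => P (x 0) (x 1) (x 2)⟩ : Ops A) ∉ projClone A := by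
  rintro ⟨i, hi⟩
  obtain ⟨a, b, hab⟩ := exists_pair_ne A
  have h1 := congrFun hi ![a, a, b]
  have h2 := congrFun hi ![b, a, a]
  simp only [Matrix.cons_val] at h1 h2
  change Fin 3 at i
  fin_cases i <;> simp [h.left, h.right, hab.symm] at h1 h2

theorem IsMinimalClone.idempotent (hC : IsMinimalClone C) {P : A → A → A → A}
    (hP : IsMaltsevFun P) (hPC : MemTernary C P) {f : Ops A} (hf : f ∈ C) (a : A) :
    f.2 (fun _ => a) = a := by
  have := hC.nontrivial
  have hD : IsClone {f : Ops A | f ∈ C ∧ ∀ a, f.2 (fun _ => a) = a} := by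
    refine ⟨fun n i => ⟨hC.1.1 n i, fun _ => rfl⟩, fun n m f g hf hg => ⟨?_, fun a => ?_⟩⟩
    · exact hC.1.2 n m f g hf.1 fun i => (hg i).1
    · have h1 : ∀ i, g i (fun _ => a) = a := fun i => (hg i).2 a
      simpa [h1] using hf.2 a
  exact (hC.subset_of_mem hD (fun _ h => h.1) ⟨hPC, fun a => hP.left a a⟩
    hP.notMem_projClone hf).2 a

/-- A minimal clone with a Mal'tsev operation contains no majority operation: a majority
operation preserves the linear orders on two-element subsets, a Mal'tsev operation does not. -/
theorem IsMinimalClone.no_majority (hC : IsMinimalClone C) {P : A → A → A → A}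
    (hP : IsMaltsevFun P) (hPC : MemTernary C P) {m : A → A → A → A} (hm : MemTernary C m)
    (h1 : ∀ x y, m x x y = x) (h2 : ∀ x y, m y x x = x) (h3 : ∀ x y, m x y x = x) : False := by
  have := hC.nontrivial
  obtain ⟨a, b, hab⟩ := exists_pair_ne A
  let R : A → A → Prop := fun x y => (x = a ∧ y = a) ∨ (x = a ∧ y = b) ∨ (x = b ∧ y = b)
  have hD : IsClone {f : Ops A | f ∈ C ∧ ∀ x y, (∀ i, R (x i) (y i)) → R (f.2 x) (f.2 y)} := by
    refine ⟨fun n i => ⟨hC.1.1 n i, fun x y h => h i⟩,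
      fun n m f g hf hg => ⟨?_, fun x y h => ?_⟩⟩
    · exact hC.1.2 n m f g hf.1 fun i => (hg i).1
    · exact hf.2 _ _ fun i => (hg i).2 x y h
  have hmp : (⟨2, fun x => m (x 0) (x 1) (x 2)⟩ : Ops A) ∉ projClone A := by
    rintro ⟨i, hi⟩
    have e1 := congrFun hi ![a, a, b]
    have e2 := congrFun hi ![b, a, a]
    have e3 := congrFun hi ![a, b, a]
    simp only [Matrix.cons_val] at e1 e2 e3
    change Fin 3 at i
    fin_cases i <;> simp [h1, h2, h3, hab] at e1 e2 e3
  have hmD : ∀ x y : Fin 3 → A, (∀ i, R (x i) (y i)) →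
      R (m (x 0) (x 1) (x 2)) (m (y 0) (y 1) (y 2)) := by
    intro x y h
    rcases h 0 with ⟨h0, h0'⟩ | ⟨h0, h0'⟩ | ⟨h0, h0'⟩ <;>
    rcases h 1 with ⟨h4, h4'⟩ | ⟨h4, h4'⟩ | ⟨h4, h4'⟩ <;>
    rcases h 2 with ⟨h5, h5'⟩ | ⟨h5, h5'⟩ | ⟨h5, h5'⟩ <;>
    simp [h0, h0', h4, h4', h5, h5', h1, h2, h3, R]
  have hr := (hC.subset_of_mem hD (fun _ h => h.1) ⟨hm, hmD⟩ hmp hPC).2 ![a, a, b] ![a, b, b]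
    (by intro i; change Fin 3 at i; fin_cases i <;> simp [R])
  simp [R, hP.left, hP.right, hab, hab.symm] at hr

/-- The image, under identification of the first and third variables, of the intersection of
the kernels of the two other identifications of adjacent variables in the free algebra on three
generators. It contains the commutator of the full congruence of the free algebra on two
generators with itself. -/
def CommRel (C : Set (Ops A)) (u v : A → A → A) : Prop :=
  ∃ w s : A → A → A → A, MemTernary C w ∧ MemTernary C s ∧
    (∀ x z, w x x z = s x x z) ∧ (∀ x z, w x z z = s x z z) ∧
    (∀ x y, w x y x = u x y) ∧ ∀ x y, s x y x = v x y

theorem CommRel.refl (hC : IsClone C) {u : A → A → A} (hu : MemBinary C u) : CommRel C u u :=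
  ⟨fun x y _ => u x y, fun x y _ => u x y, hu.comp hC 0 1, hu.comp hC 0 1,
    fun _ _ => rfl, fun _ _ => rfl, fun _ _ => rfl, fun _ _ => rfl⟩

theorem CommRel.symm {u v : A → A → A} : CommRel C u v → CommRel C v u
  | ⟨w, s, hw, hs, h1, h2, h3, h4⟩ =>
    ⟨s, w, hs, hw, fun x z => (h1 x z).symm, fun x z => (h2 x z).symm, h4, h3⟩

variable {P : A → A → A → A}

theorem CommRel.trans (hC : IsClone C) (hP : IsMaltsevFun P) (hPC : MemTernary C P)
    {u v t : A → A → A} : CommRel C u v → CommRel C v t → CommRel C u t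
  | ⟨w, s, hw, hs, h1, h2, h3, h4⟩, ⟨w', s', hw', hs', h1', h2', h3', h4'⟩ =>
    ⟨fun x y z => P (w x y z) (s x y z) (w' x y z), s', hPC.comp₃ hC hw hs hw', hs',
      fun x z => by simp only [h1, hP.left, h1'], fun x z => by simp only [h2, hP.left, h2'],
      fun x y => by simp only [h4, h3', hP.right, h3], h4'⟩

theorem CommRel.maltsev (hC : IsClone C) (hP : IsMaltsevFun P) (hPC : MemTernary C P)
    {u v t : A → A → A} (ht : MemBinary C t) :
    CommRel C u v → CommRel C (fun x y => P (u x y) (v x y) (t x y)) t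
  | ⟨w, s, hw, hs, h1, h2, h3, h4⟩ =>
    ⟨fun x y z => P (w x y z) (s x y z) (t x y), fun x y _ => t x y,
      hPC.comp₃ hC hw hs (ht.comp hC 0 1), ht.comp hC 0 1,
      fun x z => by simp only [h1, hP.left], fun x z => by simp only [h2, hP.left],
      fun x y => by simp only [h3, h4], fun _ _ => rfl⟩

theorem IsMinimalClone.not_commRel (hC : IsMinimalClone C) (hP : IsMaltsevFun P)
    (hPC : MemTernary C P) : ¬ CommRel C (fun x _ => x) fun _ y => y := by
  rintro ⟨w, s, hw, hs, h1, h2, h3, h4⟩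
  have hm : MemTernary C fun x y z => P (w x y z) (s x y z) y :=
    hPC.comp₃ hC.1 hw hs (hC.1.1 2 1)
  refine hC.no_majority hP hPC hm (fun x y => ?_) (fun x y => ?_) fun x y => ?_
  · rw [h1, hP.left]
  · rw [h2, hP.left]
  · rw [h3, h4, hP.right]

/-- Operations of `C` that agree modulo `CommRel` on the free algebra on two generators
are equal. -/
theorem IsMinimalClone.eq_of_commRel (hC : IsMinimalClone C) (hP : IsMaltsevFun P)
    (hPC : MemTernary C P) {n : ℕ} {f g : (Fin (n + 1) → A) → A} (hf : (⟨n, f⟩ : Ops A) ∈ C)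
    (hg : (⟨n, g⟩ : Ops A) ∈ C)
    (hfg : ∀ h : Fin (n + 1) → A → A → A, (∀ i, MemBinary C (h i)) →
      CommRel C (fun x y => f fun i => h i x y) fun x y => g fun i => h i x y) : f = g := by
  have hne := hC.not_commRel hP hPC
  have hne' : ¬ CommRel C (fun _ y => y) fun x _ => x := fun h => hne h.symm
  have hfst := memBinary_fst hC.1
  have hsnd := memBinary_snd hC.1
  let D : Set (Ops A) := {t | t ∈ C ∧ ∃ i, ∀ h : Fin (t.1 + 1) → A → A → A,
    (∀ i, MemBinary C (h i)) → CommRel C (fun x y => t.2 fun i => h i x y) (h i)}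
  have hD : IsClone D := by
    refine ⟨fun n i => ⟨hC.1.1 n i, i, fun h hh => CommRel.refl hC.1 (hh i)⟩,
      fun n m f g hf hg => ⟨hC.1.2 n m f g hf.1 fun i => (hg i).1, ?_⟩⟩
    obtain ⟨-, i, hi⟩ := hf
    obtain ⟨j, hj⟩ := (hg i).2
    refine ⟨j, fun h hh => ?_⟩
    refine (hi (fun k x y => g k fun i => h i x y) fun k => ?_).trans hC.1 hP hPC (hj h hh)
    exact hC.1.2 m 1 (g k) (fun i x => h i (x 0) (x 1)) (hg k).1 hh
  have hPD : (⟨2, fun x => P (x 0) (x 1) (x 2)⟩ : Ops A) ∉ D := by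
    rintro ⟨-, i, hi⟩
    have h1 := hi ![fun x _ => x, fun x _ => x, fun _ y => y]
      (by intro i; change Fin 3 at i; fin_cases i <;> assumption)
    have h2 := hi ![fun _ y => y, fun x _ => x, fun x _ => x]
      (by intro i; change Fin 3 at i; fin_cases i <;> assumption)
    simp only [Matrix.cons_val, hP.left, hP.right] at h1 h2
    change Fin 3 at i
    fin_cases i
    · exact hne' h1
    · exact hne' h1
    · exact hne' h2
  let t : (Fin (n + 1 + 1) → A) → A := fun x =>
    P (f fun i => x i.succ) (g fun i => x i.succ) (x 0)
  have htC : (⟨n + 1, t⟩ : Ops A) ∈ C :=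
    MemTernary.comp hC.1 hPC (hC.1.2 n (n + 1) f (fun i x => x i.succ) hf fun i => hC.1.1 _ _)
      (hC.1.2 n (n + 1) g (fun i x => x i.succ) hg fun i => hC.1.1 _ _) (hC.1.1 _ _)
  have ht0 : ∀ h : Fin (n + 1 + 1) → A → A → A, (∀ i, MemBinary C (h i)) →
      CommRel C (fun x y => t fun i => h i x y) (h 0) := fun h hh =>
    (hfg (fun i => h i.succ) fun i => hh _).maltsev hC.1 hP hPC (hh 0)
  have htp : (⟨n + 1, t⟩ : Ops A) ∈ projClone A := by
    by_contra h
    exact hPD (hC.subset_of_mem hD (fun _ h => h.1) ⟨htC, 0, ht0⟩ h hPC)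
  obtain ⟨j, hj⟩ := htp
  change t = fun x => x j at hj
  have hj0 : j = 0 := by
    by_contra hj0
    have := ht0 (fun i => if i = 0 then fun x _ => x else fun _ y => y)
      (by intro i; split_ifs <;> assumption)
    simp only [hj, if_neg hj0, if_true] at this
    exact hne' this
  subst hj0
  funext x
  have := congrFun hj (Fin.cons (g x) x)
  simpa [t, hP.right] using this

/-- The term condition modulo `CommRel`, for a splitting `s` of the variables into two blocks. -/
theorem IsMinimalClone.commRel_mix (hC : IsMinimalClone C) (hP : IsMaltsevFun P)
    (hPC : MemTernary C P) {n : ℕ} {T : (Fin (n + 1) → A) → A} (hT : (⟨n, T⟩ : Ops A) ∈ C)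
    (s : Fin (n + 1) → Bool) {a b : Fin (n + 1) → A → A → A} (ha : ∀ i, MemBinary C (a i))
    (hb : ∀ i, MemBinary C (b i)) :
    CommRel C (fun x y => T fun i => if s i then b i x y else a i x y) fun x y =>
      P (T fun i => a i x y) (T fun i => if s i then a i x y else b i x y)
        (T fun i => b i x y) := by
  have hid : ∀ u, MemBinary C u → ∀ x, u x x = x := fun u hu x =>
    hC.idempotent hP hPC hu x
  let L : Fin (n + 1) → (A → A → A) → A → A → A → A := fun i u x y z =>
    if s i then u x y else u z y
  have hL : ∀ i u, MemBinary C u → MemTernary C (L i u) := by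
    intro i u hu
    cases hs : s i <;> simp only [L, hs]
    · exact hu.comp hC.1 2 1
    · exact hu.comp hC.1 0 1
  have hTL : ∀ c : Fin (n + 1) → A → A → A, (∀ i, MemBinary C (c i)) →
      MemTernary C fun x y z => T fun i => L i (c i) x y z := fun c hc =>
    hC.1.2 n 2 T (fun i x => L i (c i) (x 0) (x 1) (x 2)) hT fun i => hL i _ (hc i)
  have hba : ∀ i, MemBinary C (if s i then b i else a i) := by
    intro i; split_ifs <;> simp [ha, hb]
  have hab : ∀ i, MemBinary C (if s i then a i else b i) := by
    intro i; split_ifs <;> simp [ha, hb]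
  refine ⟨_, _, hTL _ hba, hPC.comp₃ hC.1 (hTL a ha) (hTL _ hab) (hTL b hb), fun x z => ?_,
    fun x z => ?_, fun x y => ?_, fun x y => ?_⟩
  · have e1 : ∀ i, L i (if s i then b i else a i) x x z = L i (a i) x x z := by
      intro i; cases hs : s i <;> simp [L, hs, hid _ (ha i), hid _ (hb i)]
    have e2 : ∀ i, L i (if s i then a i else b i) x x z = L i (b i) x x z := by
      intro i; cases hs : s i <;> simp [L, hs, hid _ (ha i), hid _ (hb i)]
    simp only [e1, e2, hP.right]
  · have e1 : ∀ i, L i (if s i then b i else a i) x z z = L i (b i) x z z := by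
      intro i; cases hs : s i <;> simp [L, hs, hid _ (ha i), hid _ (hb i)]
    have e2 : ∀ i, L i (if s i then a i else b i) x z z = L i (a i) x z z := by
      intro i; cases hs : s i <;> simp [L, hs, hid _ (ha i), hid _ (hb i)]
    simp only [e1, e2, hP.left]
  · congr 1; funext i; cases s i <;> simp [L]
  · congr 2 <;> funext i <;> cases s i <;> simp [L]

theorem IsMinimalClone.maltsev_comm (hC : IsMinimalClone C) (hP : IsMaltsevFun P)
    (hPC : MemTernary C P) (o a b : A) : P a o b = P b o a := by
  have key := hC.eq_of_commRel hP hPC (n := 2) (f := fun x => P (x 1) (x 0) (x 2))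
    (g := fun x => P (x 2) (x 0) (x 1)) (hPC.comp hC.1 (hC.1.1 _ _) (hC.1.1 _ _) (hC.1.1 _ _))
    (hPC.comp hC.1 (hC.1.1 _ _) (hC.1.1 _ _) (hC.1.1 _ _)) fun h hh => by
      have := hC.commRel_mix hP hPC hPC ![true, false, false]
        (a := ![h 0, h 0, h 2]) (b := ![h 1, h 0, h 0])
        (by intro i; fin_cases i <;> apply hh) (by intro i; fin_cases i <;> apply hh)
      simpa [hP.left, hP.right] using this
  exact congrFun key ![o, a, b]

theorem IsMinimalClone.maltsev_assoc (hC : IsMinimalClone C) (hP : IsMaltsevFun P)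
    (hPC : MemTernary C P) (o a b c : A) : P (P a o b) o c = P (P b o c) o a := by
  have hT : (⟨3, fun x => P (P (x 1) (x 0) (x 2)) (x 0) (x 3)⟩ : Ops A) ∈ C :=
    hPC.comp hC.1 (hPC.comp hC.1 (hC.1.1 _ _) (hC.1.1 _ _) (hC.1.1 _ _)) (hC.1.1 _ _) (hC.1.1 _ _)
  have key := hC.eq_of_commRel hP hPC (g := fun x => P (P (x 2) (x 0) (x 3)) (x 0) (x 1)) hT
    (hPC.comp hC.1 (hPC.comp hC.1 (hC.1.1 _ _) (hC.1.1 _ _) (hC.1.1 _ _)) (hC.1.1 _ _) (hC.1.1 _ _))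
    fun h hh => by
      have := hC.commRel_mix hP hPC hT ![false, true, false, false]
        (a := ![h 0, h 0, h 2, h 3]) (b := ![h 0, h 1, h 0, h 0])
        (by intro i; fin_cases i <;> apply hh) (by intro i; fin_cases i <;> apply hh)
      simpa [hP.left, hP.right] using this
  exact congrFun key ![o, a, b, c]

theorem IsMinimalClone.maltsev_split_left (hC : IsMinimalClone C) (hP : IsMaltsevFun P)
    (hPC : MemTernary C P) (o a b c : A) : P a b c = P (P o b c) o a := by
  have key := hC.eq_of_commRel hP hPC (n := 3) (f := fun x => P (x 1) (x 2) (x 3))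
    (g := fun x => P (P (x 0) (x 2) (x 3)) (x 0) (x 1))
    (hPC.comp hC.1 (hC.1.1 _ _) (hC.1.1 _ _) (hC.1.1 _ _))
    (hPC.comp hC.1 (hPC.comp hC.1 (hC.1.1 _ _) (hC.1.1 _ _) (hC.1.1 _ _)) (hC.1.1 _ _) (hC.1.1 _ _))
    fun h hh => by
      have := hC.commRel_mix hP hPC hPC ![true, false, false]
        (a := ![h 0, h 2, h 3]) (b := ![h 1, h 0, h 0])
        (by intro i; fin_cases i <;> apply hh) (by intro i; fin_cases i <;> apply hh)
      simpa [hP.left, hP.right] using this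
  exact congrFun key ![o, a, b, c]

theorem IsMinimalClone.maltsev_split_right (hC : IsMinimalClone C) (hP : IsMaltsevFun P)
    (hPC : MemTernary C P) (o b c : A) : P o b c = P c o (P o b o) := by
  have key := hC.eq_of_commRel hP hPC (n := 2) (f := fun x => P (x 0) (x 1) (x 2))
    (g := fun x => P (x 2) (x 0) (P (x 0) (x 1) (x 0)))
    (hPC.comp hC.1 (hC.1.1 _ _) (hC.1.1 _ _) (hC.1.1 _ _))
    (hPC.comp hC.1 (hC.1.1 _ _) (hC.1.1 _ _) (hPC.comp hC.1 (hC.1.1 _ _) (hC.1.1 _ _) (hC.1.1 _ _)))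
    fun h hh => by
      have := hC.commRel_mix hP hPC hPC ![false, true, false]
        (a := ![h 0, h 0, h 2]) (b := ![h 0, h 1, h 0])
        (by intro i; fin_cases i <;> apply hh) (by intro i; fin_cases i <;> apply hh)
      simpa [hP.left, hP.right] using this
  exact congrFun key ![o, b, c]

theorem IsMinimalClone.exists_addCommGroup (hC : IsMinimalClone C) (hP : IsMaltsevFun P)
    (hPC : MemTernary C P) : ∃ _ : AddCommGroup A, ∀ a b c : A, P a b c = a - b + c := by
  have := hC.nontrivial
  obtain ⟨o⟩ : Nonempty A := inferInstance
  have hcomm := hC.maltsev_comm hP hPC o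
  have hassoc := hC.maltsev_assoc hP hPC o
  have hl := hC.maltsev_split_left hP hPC o
  have hr := hC.maltsev_split_right hP hPC o
  let _ : Zero A := ⟨o⟩
  let _ : Add A := ⟨fun a b => P a o b⟩
  let _ : Neg A := ⟨fun a => P o a o⟩
  let G : AddCommGroup A :=
    { nsmul := nsmulRec
      zsmul := zsmulRec
      add_assoc := fun a b c => (hassoc a b c).trans (hcomm _ _)
      zero_add := fun a => hP.left o a
      add_zero := fun a => hP.right o a
      add_comm := hcomm
      neg_add_cancel := fun a => by
        change P (P o a o) o a = o
        rw [← hl, hP.left] }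
  refine ⟨G, fun a b c => ?_⟩
  have h1 : P a b c = c + -b + a := by
    rw [hl, hr]
    rfl
  rw [h1]
  abel

/-- If the clone of `x - y + z` over a nontrivial abelian group lies in a minimal clone, then
the group has prime exponent. -/
theorem IsMinimalClone.exists_prime_nsmul_eq_zero [AddCommGroup A] (hC : IsMinimalClone C)
    (hPC : MemTernary C fun x y z => x - y + z) : ∃ q : ℕ, q.Prime ∧ ∀ a : A, q • a = 0 := by
  have := hC.nontrivial
  have hexp : AddMonoid.exponent A ≠ 1 := fun h =>
    not_subsingleton A (AddMonoid.exp_eq_one_iff.mp h)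
  obtain ⟨q, hq, hqe⟩ := Nat.exists_prime_and_dvd hexp
  have : Fact q.Prime := ⟨hq⟩
  refine ⟨q, hq, ?_⟩
  have hdvd : ∀ k : ℤ, (∀ a : A, k • a = 0) → (k : ZMod q) = 0 := by
    intro k hk
    rw [ZMod.intCast_zmod_eq_zero_iff_dvd]
    refine Int.natCast_dvd.mpr (hqe.trans (AddMonoid.exponent_dvd_of_forall_nsmul_eq_zero ?_))
    intro a
    rw [natAbs_nsmul_eq_zero]
    exact hk a
  have hterm : ∀ k : ℕ, (⟨1, fun x => x 0 + k • (x 1 - x 0)⟩ : Ops A) ∈ C := by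
    intro k
    induction k with
    | zero => simpa using hC.1.1 1 0
    | succ k ih =>
      convert hPC.comp hC.1 ih (hC.1.1 1 0) (hC.1.1 1 1) using 3 with x
      rw [succ_nsmul]
      abel
  let D : Set (Ops A) := {f | f ∈ C ∧ ∃ (c : Fin (f.1 + 1) → ℤ) (i : Fin (f.1 + 1)),
    (∀ x, f.2 x = ∑ j, c j • x j) ∧ ∀ j, (c j : ZMod q) = if j = i then 1 else 0}
  have hD : IsClone D := by
    refine ⟨fun n i => ⟨hC.1.1 n i, fun j => if j = i then 1 else 0, i, fun x => ?_, fun j => ?_⟩,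
      fun n m f g hf hg => ⟨hC.1.2 n m f g hf.1 fun i => (hg i).1, ?_⟩⟩
    · simp
    · push_cast
      rfl
    · obtain ⟨-, c, i, hc, hci⟩ := hf
      choose d k hd hdk using fun i => (hg i).2
      dsimp only at hc hd hci hdk k
      refine ⟨fun j => ∑ l, c l * d l j, k i, fun x => ?_, fun j => ?_⟩
      · simp only [hc, hd, Finset.smul_sum, Finset.sum_smul, mul_smul]
        rw [Finset.sum_comm]
      · push_cast
        simp only [hci, hdk, ite_mul, one_mul, zero_mul, Finset.sum_ite_eq', Finset.mem_univ, if_true]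
  have hPD : (⟨2, fun x => x 0 - x 1 + x 2⟩ : Ops A) ∉ D := by
    rintro ⟨-, c, i, hc, hci⟩
    change Fin 3 → ℤ at c
    change Fin 3 at i
    have hc' : ∀ x : Fin 3 → A, x 0 - x 1 + x 2 = ∑ j, c j • x j := hc
    have h0 := hdvd (c 0 - 1) fun a => by
      have := hc' ![a, 0, 0]
      simp [Fin.sum_univ_three] at this
      rw [sub_smul, one_smul, ← this, sub_self]
    have h2 := hdvd (c 2 - 1) fun a => by
      have := hc' ![0, 0, a]
      simp [Fin.sum_univ_three] at this
      rw [sub_smul, one_smul, ← this, sub_self]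
    have e0 : (c 0 : ZMod q) = if (0 : Fin 3) = i then 1 else 0 := hci 0
    have e2 : (c 2 : ZMod q) = if (2 : Fin 3) = i then 1 else 0 := hci 2
    push_cast at h0 h2
    rw [sub_eq_zero] at h0 h2
    rw [h0] at e0
    rw [h2] at e2
    fin_cases i <;> simp at e0 e2
  have hproj : (⟨1, fun x => x 0 + q • (x 1 - x 0)⟩ : Ops A) ∈ projClone A := by
    by_contra h
    refine hPD (hC.subset_of_mem hD (fun _ h => h.1)
      ⟨hterm q, ![1 - q, q], 0, fun x => ?_, fun j => ?_⟩ h hPC)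
    · simp [sub_smul, smul_sub]
      abel
    · change Fin 2 at j
      fin_cases j <;> simp
  obtain ⟨i, hi⟩ := hproj
  change Fin 2 at i
  have hi' : ∀ x : Fin 2 → A, x 0 + q • (x 1 - x 0) = x i := congrFun hi
  intro a
  have ha := hi' ![0, a]
  fin_cases i
  · simpa using ha
  · have := hdvd (q - 1) fun a => by
      have := hi' ![0, a]
      simp at this
      simp [sub_smul, this]
    simp at this

end Kearnes

/-- **Kearnes' Theorem on minimal clones with a Mal'tsev operation.**  If a minimal
clone `C` on a set `A` contains a Mal'tsev operation, then there are a prime `q` and an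
elementary abelian `q`-group structure `(A; +)` such that `C` is the clone generated by
the ternary operation `x₁ - x₂ + x₃` (the clone of an affine space over `Z_q`). -/
theorem kearnes_maltsev_minimal {A : Type u} (C : Set (Ops A)) (hC : IsMinimalClone C)
    (hm : ∃ p : (Fin 3 → A) → A, IsMaltsev p ∧ (⟨2, p⟩ : Ops A) ∈ C) :
    ∃ q : ℕ, q.Prime ∧ ∃ _ : AddCommGroup A, (∀ a : A, q • a = 0) ∧
      C = cloneGen {(⟨2, fun x : Fin 3 → A => x 0 - x 1 + x 2⟩ : Ops A)} := by
  obtain ⟨p, hp, hpC⟩ := hm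
  have hp3 : p = fun x => p ![x 0, x 1, x 2] := by
    funext x
    congr 1
    funext i
    fin_cases i <;> rfl
  have hP : IsMaltsevFun fun x y z => p ![x, y, z] :=
    ⟨fun x y => (hp x y).1, fun x y => (hp x y).2⟩
  have hPC : MemTernary C fun x y z => p ![x, y, z] := by
    rw [hp3] at hpC
    exact hpC
  have := hC.nontrivial
  obtain ⟨G, hG⟩ := hC.exists_addCommGroup hP hPC
  obtain rfl : p = fun x => x 0 - x 1 + x 2 := by
    rw [hp3]
    exact funext fun x => hG _ _ _
  obtain ⟨q, hq, hqA⟩ := hC.exists_prime_nsmul_eq_zero hpC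
  refine ⟨q, hq, G, hqA, Set.Subset.antisymm ?_ ?_⟩
  · exact hC.subset_of_mem (isClone_cloneGen _)
      (cloneGen_subset hC.1 (Set.singleton_subset_iff.mpr hpC)) (subset_cloneGen _ rfl)
      hP.notMem_projClone
  · exact cloneGen_subset hC.1 (Set.singleton_subset_iff.mpr hpC)
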